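/- Let w_x, w_{x*} be words and W⁺, W⁻ finite word sets with w_x ∉ W⁺ and w_{x*} ∉ W⁻, and set W := {w_x} ∪ W⁺ and W_* := {w_{x*}} ∪ W⁻. Then for every context index j: PMI(w_{x*}, c_j) = PMI(w_x, c_j) + ∑_{i∈W⁺} PMI(w_i, c_j) − ∑_{i∈W⁻} PMI(w_i, c_j) + ρ^{W,W_*}_j + σ^W_j − σ^{W_*}_j − (τ^W − τ^{W_*}). (PMI-level form of the paper's Corollary 5: word transformation identity, proved in Appendix D.) -/

import Mathlib

open MeasureTheory Real Finset Matrix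

namespace AnalogiesExplained

variable {Ω : Type*}

/-- Conditional probability `p(B ∣ A) = μ(A ∩ B) / μ(A)` (as a real number). -/
noncomputable def condP [MeasurableSpace Ω] (μ : Measure Ω) (A B : Set Ω) : ℝ :=
  (μ (A ∩ B)).toReal / (μ A).toReal

/-- Pointwise mutual information `PMI(A, B) = log (μ(A ∩ B) / (μ(A)·μ(B)))`. -/
noncomputable def PMI [MeasurableSpace Ω] (μ : Measure Ω) (A B : Set Ω) : ℝ :=
  Real.log ((μ (A ∩ B)).toReal / ((μ A).toReal * (μ B).toReal))

/-- The joint event of a finite word set: `A_W = ⋂ i ∈ W, A i`. -/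
def jointEvent {ι : Type*} (A : ι → Set Ω) (W : Finset ι) : Set Ω :=
  ⋂ i ∈ W, A i

/-- Paraphrase error `ρ^{W,W*}_j = log (p(B_j ∣ A_{W*}) / p(B_j ∣ A_W))`. -/
noncomputable def rho [MeasurableSpace Ω] (μ : Measure Ω) (AW AWstar B : Set Ω) : ℝ :=
  Real.log (condP μ AWstar B / condP μ AW B)

/-- Conditional-dependence error `σ^W_j = log (p(A_W ∣ B_j) / ∏_{i ∈ W} p(A_i ∣ B_j))`. -/
noncomputable def sigma [MeasurableSpace Ω] {ι : Type*} (μ : Measure Ω) (A : ι → Set Ω)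
    (W : Finset ι) (B : Set Ω) : ℝ :=
  Real.log (condP μ B (jointEvent A W) / ∏ i ∈ W, condP μ B (A i))

/-- Marginal-dependence error `τ^W = log (μ(A_W) / ∏_{i ∈ W} μ(A_i))`. -/
noncomputable def tau [MeasurableSpace Ω] {ι : Type*} (μ : Measure Ω) (A : ι → Set Ω)
    (W : Finset ι) : ℝ :=
  Real.log ((μ (jointEvent A W)).toReal / ∏ i ∈ W, (μ (A i)).toReal)

/-!
Both identities `PMI(A, B) = log p(B ∣ A) - log p(B)` and `PMI(A, B) = log p(A ∣ B) - log p(A)`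
hold. By the first, the paraphrase error is the difference of the PMIs of the two joint events. By
the second, the PMI of a joint event exceeds the sum of the PMIs of its factors by exactly `σ - τ`.
-/

section

variable [MeasurableSpace Ω] {μ : Measure Ω} {A B : Set Ω}

theorem PMI_comm (μ : Measure Ω) (A B : Set Ω) : PMI μ A B = PMI μ B A := by
  unfold PMI
  rw [Set.inter_comm, mul_comm]

theorem condP_ne_zero (hA : μ A ≠ ⊤) (hAB : μ (A ∩ B) ≠ 0) : condP μ A B ≠ 0 :=
  div_ne_zero
    (ENNReal.toReal_ne_zero.2 ⟨hAB, measure_ne_top_of_subset Set.inter_subset_left hA⟩)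
    (ENNReal.toReal_ne_zero.2 ⟨fun h ↦ hAB (measure_inter_null_of_null_left B h), hA⟩)

theorem PMI_eq_log_condP_sub_log (hA : μ A ≠ ⊤) (hB : μ B ≠ ⊤) (hAB : μ (A ∩ B) ≠ 0) :
    PMI μ A B = log (condP μ A B) - log (μ B).toReal := by
  have hB₀ : (μ B).toReal ≠ 0 :=
    ENNReal.toReal_ne_zero.2 ⟨fun h ↦ hAB (measure_inter_null_of_null_right A h), hB⟩
  rw [← log_div (condP_ne_zero hA hAB) hB₀, condP, div_div, PMI]

theorem PMI_eq_log_condP_swap_sub_log (hA : μ A ≠ ⊤) (hB : μ B ≠ ⊤) (hAB : μ (A ∩ B) ≠ 0) :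
    PMI μ A B = log (condP μ B A) - log (μ A).toReal := by
  rw [PMI_comm, PMI_eq_log_condP_sub_log hB hA (Set.inter_comm A B ▸ hAB)]

theorem rho_eq_PMI_sub_PMI {A' : Set Ω} (hA : μ A ≠ ⊤) (hA' : μ A' ≠ ⊤) (hB : μ B ≠ ⊤)
    (hAB : μ (A ∩ B) ≠ 0) (hA'B : μ (A' ∩ B) ≠ 0) :
    rho μ A A' B = PMI μ A' B - PMI μ A B := by
  rw [rho, log_div (condP_ne_zero hA' hA'B) (condP_ne_zero hA hAB),
    PMI_eq_log_condP_sub_log hA' hB hA'B, PMI_eq_log_condP_sub_log hA hB hAB,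
    sub_sub_sub_cancel_right]

end

theorem jointEvent_subset {ι : Type*} (A : ι → Set Ω) {W : Finset ι} {i : ι} (hi : i ∈ W) :
    jointEvent A W ⊆ A i :=
  Set.biInter_subset_of_mem hi

section

variable [MeasurableSpace Ω] {μ : Measure Ω} {ι : Type*} {A : ι → Set Ω} {B : Set Ω} {W : Finset ι}

theorem measure_inter_ne_zero_of_jointEvent (hWB : μ (jointEvent A W ∩ B) ≠ 0) {i : ι}
    (hi : i ∈ W) : μ (A i ∩ B) ≠ 0 :=
  fun h ↦ hWB (measure_mono_null (Set.inter_subset_inter_left B (jointEvent_subset A hi)) h)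

theorem sigma_eq_log_sub_sum_log (hB : μ B ≠ ⊤) (hWB : μ (jointEvent A W ∩ B) ≠ 0) :
    sigma μ A W B = log (condP μ B (jointEvent A W)) - ∑ i ∈ W, log (condP μ B (A i)) := by
  have condP_factor : ∀ i ∈ W, condP μ B (A i) ≠ 0 := fun i hi ↦
    condP_ne_zero hB (Set.inter_comm _ _ ▸ measure_inter_ne_zero_of_jointEvent hWB hi)
  rw [sigma, log_div (condP_ne_zero hB (Set.inter_comm _ _ ▸ hWB))
    (prod_ne_zero_iff.2 condP_factor), log_prod condP_factor]

theorem tau_eq_log_sub_sum_log (hA : ∀ i ∈ W, μ (A i) ≠ ⊤) (hW : μ (jointEvent A W) ≠ ⊤)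
    (hW₀ : μ (jointEvent A W) ≠ 0) :
    tau μ A W = log (μ (jointEvent A W)).toReal - ∑ i ∈ W, log (μ (A i)).toReal := by
  have measure_factor : ∀ i ∈ W, (μ (A i)).toReal ≠ 0 := fun i hi ↦
    ENNReal.toReal_ne_zero.2 ⟨fun h ↦ hW₀ (measure_mono_null (jointEvent_subset A hi) h), hA i hi⟩
  rw [tau, log_div (ENNReal.toReal_ne_zero.2 ⟨hW₀, hW⟩) (prod_ne_zero_iff.2 measure_factor),
    log_prod measure_factor]

theorem PMI_jointEvent (hA : ∀ i ∈ W, μ (A i) ≠ ⊤) (hW : μ (jointEvent A W) ≠ ⊤) (hB : μ B ≠ ⊤)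
    (hWB : μ (jointEvent A W ∩ B) ≠ 0) :
    PMI μ (jointEvent A W) B = ∑ i ∈ W, PMI μ (A i) B + sigma μ A W B - tau μ A W := by
  have sum_PMI : ∑ i ∈ W, PMI μ (A i) B =
      ∑ i ∈ W, log (condP μ B (A i)) - ∑ i ∈ W, log (μ (A i)).toReal := by
    rw [← sum_sub_distrib]
    exact sum_congr rfl fun i hi ↦ PMI_eq_log_condP_swap_sub_log (hA i hi) hB
      (measure_inter_ne_zero_of_jointEvent hWB hi)
  have hW₀ : μ (jointEvent A W) ≠ 0 := fun h ↦ hWB (measure_inter_null_of_null_left B h)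
  rw [PMI_eq_log_condP_swap_sub_log hW hB hWB, sum_PMI, sigma_eq_log_sub_sum_log hB hWB,
    tau_eq_log_sub_sum_log hA hW hW₀]
  ring

theorem pmi_word_transformation_identity_general {W' : Finset ι}
    (hA : ∀ i ∈ W, μ (A i) ≠ ⊤) (hA' : ∀ i ∈ W', μ (A i) ≠ ⊤)
    (hW : μ (jointEvent A W) ≠ ⊤) (hW' : μ (jointEvent A W') ≠ ⊤) (hB : μ B ≠ ⊤)
    (hWB : μ (jointEvent A W ∩ B) ≠ 0) (hW'B : μ (jointEvent A W' ∩ B) ≠ 0) :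
    ∑ i ∈ W', PMI μ (A i) B =
      ∑ i ∈ W, PMI μ (A i) B + rho μ (jointEvent A W) (jointEvent A W') B
        + sigma μ A W B - sigma μ A W' B - (tau μ A W - tau μ A W') := by
  rw [rho_eq_PMI_sub_PMI hW hW' hB hWB hW'B, PMI_jointEvent hA hW hB hWB,
    PMI_jointEvent hA' hW' hB hW'B]
  ring

end

/-- **Word transformation identity at the PMI level (Corollary 5, Appendix D).**
With `W = {w_x} ∪ W⁺` and `W_* = {w_{x*}} ∪ W⁻`:
`PMI(w_{x*},c_j) = PMI(w_x,c_j) + ∑_{i∈W⁺} PMI(w_i,c_j) − ∑_{i∈W⁻} PMI(w_i,c_j)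
  + ρ^{W,W_*}_j + σ^W_j − σ^{W_*}_j − (τ^W − τ^{W_*})`. -/
theorem pmi_word_transformation_identity
    [MeasurableSpace Ω] (μ : Measure Ω) [IsProbabilityMeasure μ]
    {ι : Type*} [DecidableEq ι] (A : ι → Set Ω) {n : ℕ} (B : Fin n → Set Ω)
    (x xstar : ι) (Wp Wm : Finset ι)
    (hx : x ∉ Wp) (hxs : xstar ∉ Wm)
    (hmA : ∀ i, MeasurableSet (A i)) (hmB : ∀ j, MeasurableSet (B j))
    (hA : ∀ i ∈ insert x Wp ∪ insert xstar Wm, 0 < (μ (A i)).toReal)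
    (hB : ∀ j, 0 < (μ (B j)).toReal)
    (hAW : 0 < (μ (jointEvent A (insert x Wp))).toReal)
    (hAWs : 0 < (μ (jointEvent A (insert xstar Wm))).toReal)
    (hAB : ∀ i ∈ insert x Wp ∪ insert xstar Wm, ∀ j, 0 < (μ (A i ∩ B j)).toReal)
    (hAWB : ∀ j, 0 < (μ (jointEvent A (insert x Wp) ∩ B j)).toReal)
    (hAWsB : ∀ j, 0 < (μ (jointEvent A (insert xstar Wm) ∩ B j)).toReal) :
    ∀ j, PMI μ (A xstar) (B j) =
      PMI μ (A x) (B j)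
        + (∑ i ∈ Wp, PMI μ (A i) (B j)) - (∑ i ∈ Wm, PMI μ (A i) (B j))
        + rho μ (jointEvent A (insert x Wp)) (jointEvent A (insert xstar Wm)) (B j)
        + sigma μ A (insert x Wp) (B j) - sigma μ A (insert xstar Wm) (B j)
        - (tau μ A (insert x Wp) - tau μ A (insert xstar Wm)) := by
  intro j
  have sum_identity := pmi_word_transformation_identity_general
    (fun i _ ↦ measure_ne_top μ (A i)) (fun i _ ↦ measure_ne_top μ (A i))
    (measure_ne_top μ _) (measure_ne_top μ _) (measure_ne_top μ (B j))
    (ENNReal.toReal_pos_iff.1 (hAWB j)).1.ne' (ENNReal.toReal_pos_iff.1 (hAWsB j)).1.ne'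
  rw [sum_insert hx, sum_insert hxs] at sum_identity
  linarith

end AnalogiesExplained
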